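/- arXiv:2603.12767 — 2 statements merged into one kernel-verified Lean document; each statement's English description precedes it below -/
import Mathlib

section
/- Let X be a real random variable with a log-concave density φ(x) = e^{-V(x)} (V : ℝ → ℝ convex), E[X²] < ∞, mean μ, and assume X is weakly symmetric, i.e. P(X ≤ μ) = 1/2. Then the function f_X(t) = E[X·1_{X≤t}]²/P(X ≤ t) + E[X·1_{X>t}]²/P(X > t) is nonincreasing on [μ, ∞) and nondecreasing on (−∞, μ], and f_X(t) < f_X(μ) for every t ≠ μ; in particular t = μ is the unique maximizer of f_X. -/
open MeasureTheory Real Set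

/-- The two-step objective `f_X(t) = E[X·1_{X≤t}]²/P(X≤t) + E[X·1_{X>t}]²/P(X>t)`. -/
noncomputable def twoStepObjective {Ω : Type*} [MeasurableSpace Ω]
    (P : Measure Ω) (X : Ω → ℝ) (t : ℝ) : ℝ :=
  (∫ ω in {ω | X ω ≤ t}, X ω ∂P) ^ 2 / (P {ω | X ω ≤ t}).toReal
    + (∫ ω in {ω | t < X ω}, X ω ∂P) ^ 2 / (P {ω | t < X ω}).toReal

/-!
Let `μ` be the mean, `S t = P(X > t)` and `G t = E[(X - μ) 1_{X > t}]`. Then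
`f_X = μ² + G² / (S (1 - S))`, and integration by parts gives `G t = (t - μ) S t + R t` with
`R t = ∫_t^∞ S`. For `t > μ` the derivative of `f_X` has the sign of
`R t (1 - 2 S t) - (t - μ) S t`. A log-concave density `φ` has an increasing hazard rate `φ / S`;
integrating `φ x S y ≤ φ y S x` over `y > t` gives `φ x R t ≤ S x S t` for `x ≤ t`. As `S μ = 1/2`,
the mean value theorem provides `x` in `(μ, t)` with `1 - 2 S t = 2 (t - μ) φ x`, so that
`R t (1 - 2 S t) ≤ 2 (t - μ) S x S t < (t - μ) S t`. The half-line below `μ` follows by applying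
this to `-X`.
-/

open Filter Topology

/-- The upper tail `t ↦ ∫_t^∞ q` of a function `q` on the line: the survival function when `q` is a
probability density, and the tail of the centred first moment when `q x = (x - c) φ x`. -/
noncomputable def upperTail (q : ℝ → ℝ) (t : ℝ) : ℝ := ∫ x in Ioi t, q x

/-- The hazard (failure) rate of a density `φ`, i.e. minus the logarithmic derivative of its
survival function. Where the survival function vanishes, the value is `0`. -/
noncomputable def hazardRate (φ : ℝ → ℝ) (t : ℝ) : ℝ := φ t / upperTail φ t

section UpperTail

variable {q : ℝ → ℝ} {t : ℝ}

lemma hasDerivAt_upperTail (hq : Integrable q) (hcont : ContinuousAt q t) :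
    HasDerivAt (upperTail q) (-q t) t := by
  have htail : upperTail q = fun s => upperTail q 0 - ∫ x in (0 : ℝ)..s, q x := by
    funext s
    rw [← intervalIntegral.integral_Ioi_sub_Ioi' hq.integrableOn hq.integrableOn, upperTail,
      upperTail, sub_sub_cancel]
  rw [htail]
  exact (intervalIntegral.integral_hasDerivAt_right hq.intervalIntegrable
    hq.aestronglyMeasurable.stronglyMeasurableAtFilter hcont).const_sub _

lemma tendsto_upperTail_atTop (q : ℝ → ℝ) : Tendsto (upperTail q) atTop (𝓝 0) :=
  tendsto_integral_Ioi_zero tendsto_id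

lemma upperTail_comp_add_right (q : ℝ → ℝ) (a t : ℝ) :
    upperTail (fun x => q (x + a)) t = upperTail q (t + a) := by
  simpa [upperTail] using (measurePreserving_add_right volume a).setIntegral_preimage_emb
    (measurableEmbedding_addRight a) q (Ioi (t + a))

lemma upperTail_nonneg (hq : ∀ x, 0 ≤ q x) (t : ℝ) : 0 ≤ upperTail q t :=
  integral_nonneg hq

lemma upperTail_pos (hq : Integrable q) (hpos : ∀ x, 0 < q x) (t : ℝ) : 0 < upperTail q t := by
  have hsupp : Function.support q = univ := Function.support_eq_univ fun x => (hpos x).ne'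
  rw [upperTail, setIntegral_pos_iff_support_of_nonneg_ae (ae_of_all _ fun x => (hpos x).le)
    hq.integrableOn, hsupp, univ_inter]
  simp

lemma strictAnti_upperTail (hq : Integrable q) (hcont : Continuous q) (hpos : ∀ x, 0 < q x) :
    StrictAnti (upperTail q) :=
  strictAnti_of_hasDerivAt_neg (fun _ => hasDerivAt_upperTail hq hcont.continuousAt)
    fun x => neg_neg_of_pos (hpos x)

end UpperTail

section LogConcave

lemma map_add_map_le_of_convexOn {𝕜 : Type*} [Field 𝕜] [LinearOrder 𝕜] [IsStrictOrderedRing 𝕜]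
    {s : Set 𝕜} {f : 𝕜 → 𝕜} (hf : ConvexOn 𝕜 s f) {a b x y : 𝕜} (ha : a ∈ s) (hb : b ∈ s)
    (hx : x ∈ Icc a b) (hxy : x + y = a + b) : f x + f y ≤ f a + f b := by
  rw [← segment_eq_Icc (hx.1.trans hx.2)] at hx
  obtain ⟨u, v, hu, hv, huv, rfl⟩ := hx
  have hy : y = v • a + u • b := by
    simp only [smul_eq_mul] at hxy ⊢
    linear_combination hxy - (a + b) * huv
  have hfx := hf.2 ha hb hu hv huv
  have hfy := hf.2 ha hb hv hu (by rwa [add_comm])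
  rw [← hy] at hfy
  simp only [smul_eq_mul] at hfx hfy ⊢
  linear_combination hfx + hfy + (f a + f b) * huv

lemma monotone_hazardRate_exp_neg {V : ℝ → ℝ} (hV : ConvexOn ℝ univ V)
    (hint : Integrable fun x => exp (-V x)) : Monotone (hazardRate fun x => exp (-V x)) := by
  intro s t hst
  have hshift : upperTail (fun x => exp (-V x)) t =
      upperTail (fun x => exp (-V (x + (t - s)))) s := by
    rw [upperTail_comp_add_right (fun x => exp (-V x)), add_sub_cancel]
  have hS := upperTail_pos hint fun x => exp_pos (-V x)
  rw [hazardRate, hazardRate, div_le_div_iff₀ (hS s) (hS t), hshift, upperTail, upperTail,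
    ← integral_const_mul, ← integral_const_mul]
  refine setIntegral_mono_on ((hint.comp_add_right _).const_mul _).integrableOn
    (hint.const_mul _).integrableOn measurableSet_Ioi fun x hx => ?_
  have hx : s < x := hx
  have := map_add_map_le_of_convexOn hV (mem_univ s) (mem_univ (x + (t - s))) (x := t) (y := x)
    ⟨hst, by linarith⟩ (by ring)
  rw [← exp_add, ← exp_add, exp_le_exp]
  linarith

end LogConcave

section MonotoneHazard

variable {φ : ℝ → ℝ} {c m s t : ℝ}

lemma sub_mul_upperTail_le (hφ : ∀ x, 0 ≤ φ x) (hint : Integrable φ)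
    (hint₁ : Integrable fun x => (x - c) * φ x) (t : ℝ) :
    (t - c) * upperTail φ t ≤ upperTail (fun x => (x - c) * φ x) t := by
  rw [upperTail, upperTail, ← integral_const_mul]
  refine setIntegral_mono_on (hint.const_mul _).integrableOn hint₁.integrableOn measurableSet_Ioi
    fun x hx => ?_
  have hx : t < x := hx
  gcongr
  exact hφ x

lemma hasDerivAt_upperTail_moment_sub (hcont : Continuous φ) (hint : Integrable φ)
    (hint₁ : Integrable fun x => (x - c) * φ x) (t : ℝ) :
    HasDerivAt (fun t => upperTail (fun x => (x - c) * φ x) t - (t - c) * upperTail φ t)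
      (-upperTail φ t) t := by
  have hG := hasDerivAt_upperTail (t := t) hint₁ (by fun_prop)
  have hS := hasDerivAt_upperTail (t := t) hint hcont.continuousAt
  refine (hG.sub (((hasDerivAt_id t).sub_const c).mul hS)).congr_deriv ?_
  simp only [id_eq]
  ring

lemma tendsto_upperTail_moment_sub (hφ : ∀ x, 0 ≤ φ x) (hint : Integrable φ)
    (hint₁ : Integrable fun x => (x - c) * φ x) :
    Tendsto (fun t => upperTail (fun x => (x - c) * φ x) t - (t - c) * upperTail φ t)
      atTop (𝓝 0) := by
  refine squeeze_zero' (Eventually.of_forall fun t =>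
    sub_nonneg.2 (sub_mul_upperTail_le hφ hint hint₁ t)) ?_
    (tendsto_upperTail_atTop fun x => (x - c) * φ x)
  filter_upwards [eventually_ge_atTop c] with t ht
  exact sub_le_self _ (mul_nonneg (sub_nonneg.2 ht) (upperTail_nonneg hφ t))

lemma integrableOn_upperTail (hcont : Continuous φ) (hφ : ∀ x, 0 ≤ φ x) (hint : Integrable φ)
    (hint₁ : Integrable fun x => (x - c) * φ x) (t : ℝ) :
    IntegrableOn (upperTail φ) (Ioi t) := by
  simpa using (integrableOn_Ioi_deriv_of_nonpos'
    (fun x _ => hasDerivAt_upperTail_moment_sub hcont hint hint₁ x)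
    (fun x _ => neg_nonpos.2 (upperTail_nonneg hφ x))
    (tendsto_upperTail_moment_sub hφ hint hint₁)).neg

lemma upperTail_upperTail (hcont : Continuous φ) (hφ : ∀ x, 0 ≤ φ x) (hint : Integrable φ)
    (hint₁ : Integrable fun x => (x - c) * φ x) (t : ℝ) :
    upperTail (upperTail φ) t =
      upperTail (fun x => (x - c) * φ x) t - (t - c) * upperTail φ t := by
  have := integral_Ioi_of_hasDerivAt_of_nonpos'
    (fun x (_ : x ∈ Ici t) => hasDerivAt_upperTail_moment_sub hcont hint hint₁ x)
    (fun x _ => neg_nonpos.2 (upperTail_nonneg hφ x))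
    (tendsto_upperTail_moment_sub hφ hint hint₁)
  rwa [integral_neg, zero_sub, neg_inj] at this

lemma mul_upperTail_upperTail_le (hpos : ∀ x, 0 < φ x) (hint : Integrable φ)
    (hintS : IntegrableOn (upperTail φ) (Ioi t)) (hhaz : MonotoneOn (hazardRate φ) (Ici s))
    (hst : s ≤ t) :
    φ s * upperTail (upperTail φ) t ≤ upperTail φ s * upperTail φ t := by
  have hS := upperTail_pos hint hpos
  rw [upperTail, upperTail.eq_def φ t, ← integral_const_mul, ← integral_const_mul]
  refine setIntegral_mono_on (hintS.const_mul _) (hint.const_mul _).integrableOn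
    measurableSet_Ioi fun x hx => ?_
  have hsx : s ≤ x := hst.trans (le_of_lt hx)
  have := (div_le_div_iff₀ (hS s) (hS x)).1 (hhaz self_mem_Ici hsx hsx)
  rwa [mul_comm (upperTail φ s)]

lemma upperTail_sub_mul_upperTail_upperTail_lt (hcont : Continuous φ) (hpos : ∀ x, 0 < φ x)
    (hint : Integrable φ) (hintS : IntegrableOn (upperTail φ) (Ioi t))
    (hhaz : MonotoneOn (hazardRate φ) (Ici m)) (hmt : m < t) :
    (upperTail φ m - upperTail φ t) * upperTail (upperTail φ) t
      < (t - m) * (upperTail φ m * upperTail φ t) := by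
  have hderiv (x : ℝ) := hasDerivAt_upperTail (t := x) hint hcont.continuousAt
  obtain ⟨x, hx, hslope⟩ := exists_hasDerivAt_eq_slope _ _ hmt
    (HasDerivAt.continuousOn fun x _ => hderiv x) fun x _ => hderiv x
  have hmt' : 0 < t - m := sub_pos.2 hmt
  have hmvt : upperTail φ m - upperTail φ t = (t - m) * φ x := by
    rw [eq_div_iff hmt'.ne'] at hslope
    linear_combination hslope
  calc (upperTail φ m - upperTail φ t) * upperTail (upperTail φ) t
      = (t - m) * (φ x * upperTail (upperTail φ) t) := by rw [hmvt, mul_assoc]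
    _ ≤ (t - m) * (upperTail φ x * upperTail φ t) := by
        refine mul_le_mul_of_nonneg_left ?_ hmt'.le
        exact mul_upperTail_upperTail_le hpos hint hintS
          (hhaz.mono (Ici_subset_Ici.2 hx.1.le)) hx.2.le
    _ < (t - m) * (upperTail φ m * upperTail φ t) := by
        gcongr
        · exact upperTail_pos hint hpos t
        · exact strictAnti_upperTail hint hcont hpos hx.1

lemma hasDerivAt_sq_div_mul_one_sub {G S : ℝ → ℝ} {p : ℝ} (hG : HasDerivAt G (-((t - m) * p)) t)
    (hS : HasDerivAt S (-p) t) (hne : S t * (1 - S t) ≠ 0) :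
    HasDerivAt (fun t => G t ^ 2 / (S t * (1 - S t)))
      (-(G t * p * (2 * (t - m) * (S t * (1 - S t)) - G t * (1 - 2 * S t)))
        / (S t * (1 - S t)) ^ 2) t := by
  refine ((hG.pow 2).div (hS.mul (hS.const_sub 1)) hne).congr_deriv ?_
  simp only [Pi.mul_apply, Pi.pow_apply]
  congr 1
  push_cast
  ring

lemma strictAntiOn_sq_upperTail_div (hcont : Continuous φ) (hpos : ∀ x, 0 < φ x)
    (hint : Integrable φ) (hint₁ : Integrable fun x => (x - m) * φ x)
    (hhaz : MonotoneOn (hazardRate φ) (Ici m)) (hmedian : upperTail φ m = 1 / 2) :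
    StrictAntiOn (fun t => upperTail (fun x => (x - m) * φ x) t ^ 2 /
      (upperTail φ t * (1 - upperTail φ t))) (Ici m) := by
  have hφ (x : ℝ) : 0 ≤ φ x := (hpos x).le
  have hSpos := upperTail_pos hint hpos
  have hSanti := strictAnti_upperTail hint hcont hpos
  have hden {t : ℝ} (ht : m ≤ t) : 0 < upperTail φ t * (1 - upperTail φ t) :=
    mul_pos (hSpos t) (by linarith [hSanti.antitone ht])
  have hderiv {t : ℝ} (ht : m ≤ t) := hasDerivAt_sq_div_mul_one_sub
    (m := m) (p := φ t)
    (hasDerivAt_upperTail (q := fun x => (x - m) * φ x) hint₁ (by fun_prop))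
    (hasDerivAt_upperTail hint hcont.continuousAt) (hden ht).ne'
  refine strictAntiOn_of_hasDerivWithinAt_neg (convex_Ici m)
    (HasDerivAt.continuousOn fun t ht => hderiv ht)
    (fun t ht => (hderiv (interior_subset ht)).hasDerivWithinAt) fun t ht => ?_
  rw [interior_Ici] at ht
  have hmt : 0 < t - m := sub_pos.2 ht
  have hGpos : 0 < upperTail (fun x => (x - m) * φ x) t :=
    (mul_pos hmt (hSpos t)).trans_le (sub_mul_upperTail_le hφ hint hint₁ t)
  have hexcess := upperTail_sub_mul_upperTail_upperTail_lt hcont hpos hint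
    (integrableOn_upperTail hcont hφ hint hint₁ t) hhaz ht
  rw [upperTail_upperTail hcont hφ hint hint₁, hmedian] at hexcess
  refine div_neg_of_neg_of_pos (neg_neg_of_pos ?_) (pow_pos (hden (le_of_lt ht)) 2)
  refine mul_pos (mul_pos hGpos (hpos t)) ?_
  linear_combination 2 * hexcess

end MonotoneHazard

section Objective

variable {Ω : Type*} [MeasurableSpace Ω] {P : Measure Ω} {X : Ω → ℝ} {φ : ℝ → ℝ} {t : ℝ}

lemma twoStepObjective_eq_sq_div_add_sq [IsProbabilityMeasure P] (hX : Integrable X P)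
    (h₀ : P.real {ω | t < X ω} ≠ 0) (h₁ : P.real {ω | t < X ω} ≠ 1) :
    twoStepObjective P X t =
      (∫ ω in {ω | t < X ω}, (X ω - ∫ ω', X ω' ∂P) ∂P) ^ 2 /
        (P.real {ω | t < X ω} * (1 - P.real {ω | t < X ω})) + (∫ ω, X ω ∂P) ^ 2 := by
  have hmeas : NullMeasurableSet {ω | t < X ω} P :=
    nullMeasurableSet_lt aemeasurable_const hX.aemeasurable
  have hcompl : {ω | X ω ≤ t} = {ω | t < X ω}ᶜ := by
    ext ω
    simp
  have hprob : P.real {ω | X ω ≤ t} = 1 - P.real {ω | t < X ω} := by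
    rw [hcompl, probReal_compl_eq_one_sub₀ hmeas]
  have hlower : ∫ ω in {ω | X ω ≤ t}, X ω ∂P =
      ∫ ω, X ω ∂P - ∫ ω in {ω | t < X ω}, X ω ∂P := by
    rw [hcompl, ← integral_add_compl₀ hmeas hX, add_sub_cancel_left]
  have hcentre : ∫ ω in {ω | t < X ω}, (X ω - ∫ ω', X ω' ∂P) ∂P =
      ∫ ω in {ω | t < X ω}, X ω ∂P - P.real {ω | t < X ω} * ∫ ω, X ω ∂P := by
    rw [integral_sub hX.integrableOn (integrable_const _), setIntegral_const, smul_eq_mul]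
  have h₁' : 1 - P.real {ω | t < X ω} ≠ 0 := sub_ne_zero.2 h₁.symm
  rw [twoStepObjective, ← measureReal_def, ← measureReal_def, hlower, hprob, hcentre]
  field_simp
  ring

lemma setOf_lt_ae_eq_setOf_le (ht : P (X ⁻¹' {t}) = 0) :
    {ω | X ω < t} =ᵐ[P] {ω | X ω ≤ t} := by
  have hne : ∀ᵐ ω ∂P, X ω ≠ t := measure_eq_zero_iff_ae_notMem.1 ht
  filter_upwards [hne] with ω hω
  exact propext hω.le_iff_lt.symm

lemma twoStepObjective_neg (ht : P (X ⁻¹' {t}) = 0) :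
    twoStepObjective P (fun ω => -X ω) (-t) = twoStepObjective P X t := by
  have hlt := setOf_lt_ae_eq_setOf_le ht
  have hle : {ω | t ≤ X ω} =ᵐ[P] {ω | t < X ω} := by
    simpa only [compl_ofPred, not_lt, not_le] using hlt.compl
  simp only [twoStepObjective, neg_le_neg_iff, neg_lt_neg_iff, integral_neg, neg_sq,
    setIntegral_congr_set hle, setIntegral_congr_set hlt, measure_congr hle, measure_congr hlt]
  rw [add_comm]

lemma setIntegral_comp_of_map_eq_withDensity (hX : AEMeasurable X P) (hφ : Measurable φ)
    (hφ₀ : ∀ x, 0 ≤ φ x)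
    (hdens : P.map X = volume.withDensity fun x => ENNReal.ofReal (φ x)) {u : ℝ → ℝ}
    (hu : Measurable u) {s : Set ℝ} (hs : MeasurableSet s) :
    ∫ ω in X ⁻¹' s, u (X ω) ∂P = ∫ x in s, u x * φ x := by
  rw [← setIntegral_map hs hu.aestronglyMeasurable hX, hdens,
    setIntegral_withDensity_eq_setIntegral_toReal_smul hφ.ennreal_ofReal (by simp) _ hs]
  simp only [ENNReal.toReal_ofReal (hφ₀ _), smul_eq_mul, mul_comm]

lemma measureReal_preimage_of_map_eq_withDensity [IsFiniteMeasure P] (hX : AEMeasurable X P)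
    (hφ : Measurable φ) (hφ₀ : ∀ x, 0 ≤ φ x)
    (hdens : P.map X = volume.withDensity fun x => ENNReal.ofReal (φ x)) {s : Set ℝ}
    (hs : MeasurableSet s) : P.real (X ⁻¹' s) = ∫ x in s, φ x := by
  simpa using setIntegral_comp_of_map_eq_withDensity hX hφ hφ₀ hdens
    (measurable_const (a := (1 : ℝ))) hs

lemma integrable_mul_of_map_eq_withDensity (hX : AEMeasurable X P) (hφ : Measurable φ)
    (hφ₀ : ∀ x, 0 ≤ φ x)
    (hdens : P.map X = volume.withDensity fun x => ENNReal.ofReal (φ x)) {u : ℝ → ℝ}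
    (hu : Measurable u) (hint : Integrable (fun ω => u (X ω)) P) :
    Integrable fun x => u x * φ x := by
  have hmap := (integrable_map_measure hu.aestronglyMeasurable hX).2 hint
  rw [hdens, integrable_withDensity_iff_integrable_smul' hφ.ennreal_ofReal (by simp)] at hmap
  simpa only [ENNReal.toReal_ofReal (hφ₀ _), smul_eq_mul, mul_comm] using hmap

lemma integrable_of_map_eq_withDensity [IsFiniteMeasure P] (hX : AEMeasurable X P)
    (hφ : Measurable φ) (hφ₀ : ∀ x, 0 ≤ φ x)
    (hdens : P.map X = volume.withDensity fun x => ENNReal.ofReal (φ x)) : Integrable φ := by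
  simpa using integrable_mul_of_map_eq_withDensity hX hφ hφ₀ hdens
    (measurable_const (a := (1 : ℝ))) (integrable_const _)

lemma map_neg_eq_withDensity {f : ℝ → ENNReal} (hX : AEMeasurable X P)
    (hdens : P.map X = volume.withDensity f) :
    P.map (fun ω => -X ω) = volume.withDensity fun x => f (-x) := by
  have hcomp : P.map (fun ω => -X ω) = (P.map X).map Neg.neg :=
    (AEMeasurable.map_map_of_aemeasurable measurable_neg.aemeasurable hX).symm
  ext s hs
  rw [hcomp, hdens, Measure.map_apply measurable_neg hs, withDensity_apply _ hs,
    withDensity_apply _ (measurable_neg hs)]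
  simpa using (Measure.measurePreserving_neg volume).setLIntegral_comp_preimage_emb
    (MeasurableEquiv.neg ℝ).measurableEmbedding (fun x => f (-x)) s

lemma strictAntiOn_twoStepObjective_of_monotoneOn_hazardRate [IsProbabilityMeasure P]
    (hX : Integrable X P) (hcont : Continuous φ) (hpos : ∀ x, 0 < φ x)
    (hdens : P.map X = volume.withDensity fun x => ENNReal.ofReal (φ x))
    (hhaz : MonotoneOn (hazardRate φ) (Ici (∫ ω, X ω ∂P)))
    (hsym : P {ω | ∫ ω', X ω' ∂P < X ω} = 1 / 2) :
    StrictAntiOn (twoStepObjective P X) (Ici (∫ ω, X ω ∂P)) := by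
  set m := ∫ ω, X ω ∂P with hm
  have hφ₀ (x : ℝ) : 0 ≤ φ x := (hpos x).le
  have hint := integrable_of_map_eq_withDensity hX.aemeasurable hcont.measurable hφ₀ hdens
  have hint₁ : Integrable fun x => (x - m) * φ x :=
    integrable_mul_of_map_eq_withDensity hX.aemeasurable hcont.measurable hφ₀ hdens
      (u := fun x => x - m) (by fun_prop) (hX.sub (integrable_const m))
  have hprob (t : ℝ) : P.real {ω | t < X ω} = upperTail φ t :=
    measureReal_preimage_of_map_eq_withDensity hX.aemeasurable hcont.measurable hφ₀ hdens
      measurableSet_Ioi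
  have hmoment (t : ℝ) : ∫ ω in {ω | t < X ω}, (X ω - m) ∂P =
      upperTail (fun x => (x - m) * φ x) t :=
    setIntegral_comp_of_map_eq_withDensity hX.aemeasurable hcont.measurable hφ₀ hdens
      (u := fun x => x - m) (by fun_prop) measurableSet_Ioi
  have hmedian : upperTail φ m = 1 / 2 := by
    rw [← hprob, measureReal_def, hsym]
    simp
  refine ((strictAntiOn_sq_upperTail_div hcont hpos hint hint₁ hhaz hmedian).add_const
    (m ^ 2)).congr fun t ht => ?_
  have hS : upperTail φ t ≤ 1 / 2 :=
    hmedian ▸ (strictAnti_upperTail hint hcont hpos).antitone ht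
  have h₀ : P.real {ω | t < X ω} ≠ 0 := hprob t ▸ (upperTail_pos hint hpos t).ne'
  have h₁ : P.real {ω | t < X ω} ≠ 1 := by
    rw [hprob]
    linarith
  rw [twoStepObjective_eq_sq_div_add_sq hX h₀ h₁, ← hm, hmoment, hprob]

lemma measure_preimage_singleton_of_map_eq_withDensity {f : ℝ → ENNReal} (hX : AEMeasurable X P)
    (hdens : P.map X = volume.withDensity f) (t : ℝ) : P (X ⁻¹' {t}) = 0 := by
  rw [← Measure.map_apply_of_aemeasurable hX (measurableSet_singleton t), hdens]
  exact withDensity_absolutelyContinuous _ _ (measure_singleton t)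

lemma strictMonoOn_twoStepObjective_of_monotoneOn_hazardRate_neg [IsProbabilityMeasure P]
    (hX : Integrable X P) (hcont : Continuous φ) (hpos : ∀ x, 0 < φ x)
    (hdens : P.map X = volume.withDensity fun x => ENNReal.ofReal (φ x))
    (hhaz : MonotoneOn (hazardRate fun x => φ (-x)) (Ici (-∫ ω, X ω ∂P)))
    (hsym : P {ω | X ω < ∫ ω', X ω' ∂P} = 1 / 2) :
    StrictMonoOn (twoStepObjective P X) (Iic (∫ ω, X ω ∂P)) := by
  have hmean : ∫ ω, -X ω ∂P = -∫ ω, X ω ∂P := integral_neg X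
  have hdens_neg : P.map (fun ω => -X ω) = volume.withDensity fun x => ENNReal.ofReal (φ (-x)) :=
    map_neg_eq_withDensity (f := fun x => ENNReal.ofReal (φ x)) hX.aemeasurable hdens
  have hneg : StrictAntiOn (twoStepObjective P fun ω => -X ω) (Ici (∫ ω, -X ω ∂P)) :=
    strictAntiOn_twoStepObjective_of_monotoneOn_hazardRate hX.neg (hcont.comp continuous_neg)
      (fun x => hpos (-x)) hdens_neg (by rwa [hmean])
      (by simpa only [hmean, neg_lt_neg_iff] using hsym)
  rw [hmean] at hneg
  have hreflect (t : ℝ) : twoStepObjective P (fun ω => -X ω) (-t) = twoStepObjective P X t :=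
    twoStepObjective_neg (measure_preimage_singleton_of_map_eq_withDensity hX.aemeasurable hdens t)
  intro s hs t ht hst
  rw [← hreflect s, ← hreflect t]
  exact hneg (neg_le_neg (mem_Iic.1 ht)) (neg_le_neg (mem_Iic.1 hs)) (neg_lt_neg hst)

end Objective

theorem mean_is_unique_maximizer_of_weaklySymmetric_logConcave_general {Ω : Type*}
    [MeasurableSpace Ω] (P : Measure Ω) [IsProbabilityMeasure P] (X : Ω → ℝ) (hX : Integrable X P)
    (φ : ℝ → ℝ) (hcont : Continuous φ) (hpos : ∀ x, 0 < φ x)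
    (hdens : P.map X = volume.withDensity fun x => ENNReal.ofReal (φ x))
    (μ : ℝ) (hμ : μ = ∫ ω, X ω ∂P)
    (hhaz : MonotoneOn (hazardRate φ) (Ici μ))
    (hhaz_neg : MonotoneOn (hazardRate fun x => φ (-x)) (Ici (-μ)))
    (hsym : P {ω | X ω ≤ μ} = 1 / 2) :
    StrictAntiOn (twoStepObjective P X) (Ici μ)
      ∧ StrictMonoOn (twoStepObjective P X) (Iic μ)
      ∧ ∀ t : ℝ, t ≠ μ → twoStepObjective P X t < twoStepObjective P X μ := by
  subst hμ
  set m := ∫ ω, X ω ∂P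
  have hlt : P {ω | X ω < m} = 1 / 2 := by
    rw [← hsym, measure_congr (setOf_lt_ae_eq_setOf_le
      (measure_preimage_singleton_of_map_eq_withDensity hX.aemeasurable hdens m))]
  have hgt : P {ω | m < X ω} = 1 / 2 := by
    have hcompl : {ω | m < X ω} = {ω | X ω ≤ m}ᶜ := by
      ext ω
      simp
    rw [hcompl, prob_compl_eq_one_sub₀ (nullMeasurableSet_le hX.aemeasurable aemeasurable_const),
      hsym, one_div, ENNReal.one_sub_inv_two]
  have hanti := strictAntiOn_twoStepObjective_of_monotoneOn_hazardRate hX hcont hpos hdens hhaz hgt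
  have hmono := strictMonoOn_twoStepObjective_of_monotoneOn_hazardRate_neg hX hcont hpos hdens
    hhaz_neg hlt
  refine ⟨hanti, hmono, fun t ht => ?_⟩
  rcases ht.lt_or_gt with h | h
  · exact hmono h.le self_mem_Iic h
  · exact hanti self_mem_Ici h.le h

/-- if `X` has a log-concave density `e^{-V}` (`V` convex), `E[X²] < ∞`,
mean `μ`, and is weakly symmetric (`P(X ≤ μ) = 1/2`), then `f_X` is nonincreasing on `[μ, ∞)`,
nondecreasing on `(−∞, μ]`, and `f_X(t) < f_X(μ)` for every `t ≠ μ`; in particular `μ` is the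
unique maximizer of `f_X`. -/
theorem mean_is_unique_maximizer_of_weaklySymmetric_logConcave {Ω : Type*} [MeasurableSpace Ω]
    (P : Measure Ω) [IsProbabilityMeasure P] (X : Ω → ℝ) (hX : Measurable X)
    (V : ℝ → ℝ) (hV : ConvexOn ℝ Set.univ V)
    (hdens : Measure.map X P
      = volume.withDensity (fun x => ENNReal.ofReal (Real.exp (-V x))))
    (hX2 : Integrable (fun ω => (X ω) ^ 2) P)
    (μ : ℝ) (hμ : μ = ∫ ω, X ω ∂P)
    (hsym : P {ω | X ω ≤ μ} = 1 / 2) :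
    AntitoneOn (twoStepObjective P X) (Set.Ici μ)
      ∧ MonotoneOn (twoStepObjective P X) (Set.Iic μ)
      ∧ ∀ t : ℝ, t ≠ μ → twoStepObjective P X t < twoStepObjective P X μ := by
  have hXint : Integrable X P :=
    ((memLp_two_iff_integrable_sq hX.aestronglyMeasurable).2 hX2).integrable one_le_two
  have hVcont : Continuous V := continuousOn_univ.1 (hV.continuousOn isOpen_univ)
  have hVneg : ConvexOn ℝ univ fun x => V (-x) := hV.comp_linearMap (-LinearMap.id)
  have hint : Integrable fun x => exp (-V x) := integrable_of_map_eq_withDensity hX.aemeasurable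
    (by fun_prop) (fun x => (exp_pos _).le) hdens
  obtain ⟨hanti, hmono, hlt⟩ := mean_is_unique_maximizer_of_weaklySymmetric_logConcave_general
    P X hXint (fun x => exp (-V x)) (by fun_prop) (fun x => exp_pos _) hdens μ hμ
    ((monotone_hazardRate_exp_neg hV hint).monotoneOn _)
    ((monotone_hazardRate_exp_neg hVneg hint.comp_neg).monotoneOn _) hsym
  exact ⟨hanti.antitoneOn, hmono.monotoneOn, hlt⟩
end

section
/- Let Y be a random vector in ℝ^d with a centered elliptical distribution with positive definite scatter matrix Σ (density y ↦ C·g(yᵀΣ⁻¹y) with respect to Lebesgue measure) and E[‖Y‖] < ∞, so E[Y] = 0. Fix a unit vector u and let Z = ⟨Y, u⟩. Then for every t ∈ ℝ, the vector identity E[Y·1_{Z ≤ t}] = (Σu / (uᵀΣu)) · E[Z·1_{Z ≤ t}] holds. -/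
open MeasureTheory Real Set
open scoped RealInnerProductSpace

/-!
Let `v = Σu`. The linear involution `L` fixing the line `ℝv` pointwise and acting as `-1` on the
hyperplane `u^⊥` preserves the quadratic form `y ↦ ⟪y, Σ⁻¹ y⟫`, because `u^⊥` is the orthogonal
complement of `v` for that form. As `|det L| = 1`, the law of `Y` is `L`-invariant, and so is
`⟪·, u⟫`. Hence `y` may be averaged with `L y` under the integral, and
`y + L y = (2 * ⟪y, u⟫ / ⟪u, v⟫) • v`.
-/

section MeasurePreserving

variable {α β F : Type*} [MeasurableSpace α] [MeasurableSpace β]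
  [NormedAddCommGroup F] [NormedSpace ℝ F]

theorem measurePreserving_withDensity_comp {μ : Measure α} {ν : Measure β} {φ : α → β}
    (hφ : MeasurePreserving φ μ ν) (hemb : MeasurableEmbedding φ) (f : β → ENNReal) :
    MeasurePreserving φ (μ.withDensity (f ∘ φ)) (ν.withDensity f) := by
  refine ⟨hφ.measurable, Measure.ext fun s hs => ?_⟩
  rw [Measure.map_apply hφ.measurable hs, withDensity_apply _ hs,
    withDensity_apply _ (hφ.measurable hs)]
  exact hφ.setLIntegral_comp_preimage_emb hemb f s

theorem setIntegral_add_comp_eq_two_smul {μ : Measure α} {φ : α → α}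
    (hφ : MeasurePreserving φ μ μ) (hemb : MeasurableEmbedding φ) {s : Set α}
    (hs : φ ⁻¹' s = s) {f : α → F} (hf : IntegrableOn f s μ) :
    ∫ x in s, (f x + f (φ x)) ∂μ = (2 : ℝ) • ∫ x in s, f x ∂μ := by
  have hφs : MeasurePreserving φ (μ.restrict s) (μ.restrict s) := by
    simpa only [hs] using hφ.restrict_preimage_emb hemb s
  have hfφ : IntegrableOn (fun x => f (φ x)) s μ := hφs.integrable_comp_of_integrable hf
  rw [integral_add hf hfφ, hφs.integral_comp hemb, two_smul]

end MeasurePreserving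

section LinearInvolution

variable {E : Type*} [NormedAddCommGroup E] [NormedSpace ℝ E] [FiniteDimensional ℝ E]
  [MeasurableSpace E] [BorelSpace E] {L : E →ₗ[ℝ] E}

theorem measurableEmbedding_of_involutive (hL : Function.Involutive L) :
    MeasurableEmbedding L :=
  (MeasurableEquiv.ofInvolutive L hL
    L.continuous_of_finiteDimensional.measurable).measurableEmbedding

theorem measurePreserving_of_involutive (hL : Function.Involutive L) (μ : Measure E)
    [μ.IsAddHaarMeasure] : MeasurePreserving L μ μ := by
  have hdet_sq : LinearMap.det L * LinearMap.det L = 1 := by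
    rw [← LinearMap.det_comp, LinearMap.ext (f := L ∘ₗ L) (g := LinearMap.id) hL,
      LinearMap.det_id]
  have habs : |(LinearMap.det L)⁻¹| = 1 := by
    rcases mul_self_eq_one_iff.1 hdet_sq with h | h <;> simp [h]
  refine ⟨L.continuous_of_finiteDimensional.measurable, ?_⟩
  rw [Measure.map_linearMap_addHaar_eq_smul_addHaar μ (left_ne_zero_of_mul_eq_one hdet_sq),
    habs, ENNReal.ofReal_one, one_smul]

end LinearInvolution

section AxialSymmetry

variable {E : Type*} [NormedAddCommGroup E] [InnerProductSpace ℝ E]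

/-- The oblique symmetry about the axis `ℝv` along the hyperplane `u^⊥`, that is, the linear
involution equal to `1` on `ℝv` and to `-1` on `u^⊥`. It is meaningful only if `⟪u, v⟫ ≠ 0`. -/
noncomputable def axialSymmetry (u v : E) : E →ₗ[ℝ] E :=
  -Module.preReflection v ((2 / ⟪u, v⟫) • innerₗ E u)

variable {u v : E}

theorem axialSymmetry_apply (u v y : E) :
    axialSymmetry u v y = (2 / ⟪u, v⟫ * ⟪y, u⟫) • v - y := by
  simp [axialSymmetry, Module.preReflection_apply, real_inner_comm]

theorem involutive_axialSymmetry (huv : ⟪u, v⟫ ≠ 0) :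
    Function.Involutive (axialSymmetry u v) := by
  have hinv : Function.Involutive (Module.preReflection v ((2 / ⟪u, v⟫) • innerₗ E u)) :=
    Module.involutive_preReflection (div_mul_cancel₀ 2 huv)
  intro y
  simp only [axialSymmetry, LinearMap.neg_apply, map_neg, neg_neg, hinv y]

theorem inner_axialSymmetry (huv : ⟪u, v⟫ ≠ 0) (y : E) :
    ⟪axialSymmetry u v y, u⟫ = ⟪y, u⟫ := by
  rw [axialSymmetry_apply, inner_sub_left, real_inner_smul_left, real_inner_comm u v]
  field_simp
  ring

theorem inner_axialSymmetry_map_self {Q : E →ₗ[ℝ] E} (hQ : Q.IsSymmetric) (hQv : Q v = u)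
    (huv : ⟪u, v⟫ ≠ 0) (y : E) :
    ⟪axialSymmetry u v y, Q (axialSymmetry u v y)⟫ = ⟪y, Q y⟫ := by
  have hvQ : ⟪v, Q y⟫ = ⟪y, u⟫ := by rw [← hQ v y, hQv, real_inner_comm]
  simp only [axialSymmetry_apply, map_sub, map_smul, hQv, inner_sub_left, inner_sub_right,
    real_inner_smul_left, real_inner_smul_right, hvQ, real_inner_comm u v]
  field_simp
  ring

variable [FiniteDimensional ℝ E] [MeasurableSpace E] [BorelSpace E]

theorem measurePreserving_axialSymmetry_withDensity {Q : E →ₗ[ℝ] E} (hQ : Q.IsSymmetric)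
    (hQv : Q v = u) (huv : ⟪u, v⟫ ≠ 0) (μ : Measure E) [μ.IsAddHaarMeasure] (G : ℝ → ENNReal) :
    MeasurePreserving (axialSymmetry u v) (μ.withDensity fun y => G ⟪y, Q y⟫)
      (μ.withDensity fun y => G ⟪y, Q y⟫) := by
  have hinv := involutive_axialSymmetry huv
  simpa only [Function.comp_def, inner_axialSymmetry_map_self hQ hQv huv] using
    measurePreserving_withDensity_comp (measurePreserving_of_involutive hinv μ)
      (measurableEmbedding_of_involutive hinv) fun y => G ⟪y, Q y⟫

theorem setIntegral_id_eq_smul_of_measurePreserving_axialSymmetry {ν : Measure E}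
    (huv : ⟪u, v⟫ ≠ 0) (hν : MeasurePreserving (axialSymmetry u v) ν ν) {B : Set ℝ}
    (hint : IntegrableOn id {y | ⟪y, u⟫ ∈ B} ν) :
    ∫ y in {y | ⟪y, u⟫ ∈ B}, y ∂ν = ((∫ y in {y | ⟪y, u⟫ ∈ B}, ⟪y, u⟫ ∂ν) / ⟪u, v⟫) • v := by
  have hemb := measurableEmbedding_of_involutive (involutive_axialSymmetry huv)
  have hs : axialSymmetry u v ⁻¹' {y | ⟪y, u⟫ ∈ B} = {y | ⟪y, u⟫ ∈ B} := by
    simp only [preimage_ofPred_eq, inner_axialSymmetry huv]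
  refine smul_right_injective E (two_ne_zero (α := ℝ)) ?_
  calc (2 : ℝ) • ∫ y in {y | ⟪y, u⟫ ∈ B}, y ∂ν
      = ∫ y in {y | ⟪y, u⟫ ∈ B}, (y + axialSymmetry u v y) ∂ν :=
        (setIntegral_add_comp_eq_two_smul hν hemb hs hint).symm
    _ = ∫ y in {y | ⟪y, u⟫ ∈ B}, (2 / ⟪u, v⟫ * ⟪y, u⟫) • v ∂ν := by
        simp only [axialSymmetry_apply, add_sub_cancel]
    _ = (2 : ℝ) • ((∫ y in {y | ⟪y, u⟫ ∈ B}, ⟪y, u⟫ ∂ν) / ⟪u, v⟫) • v := by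
        rw [integral_smul_const, integral_const_mul, smul_smul, div_mul_eq_mul_div, mul_div_assoc]

/-- `Q` plays the role of `Σ⁻¹`, and `v` that of `Σu`. -/
theorem elliptical_truncated_mean_direction_general {Ω : Type*} [MeasurableSpace Ω]
    {P : Measure Ω} {Y : Ω → E} (hY : Integrable Y P) {Q : E →ₗ[ℝ] E} (hQ : Q.IsSymmetric)
    (hQv : Q v = u) (huv : ⟪u, v⟫ ≠ 0) {μ : Measure E} [μ.IsAddHaarMeasure] {G : ℝ → ENNReal}
    (hdens : P.map Y = μ.withDensity fun y => G ⟪y, Q y⟫) {B : Set ℝ} (hB : MeasurableSet B) :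
    ∫ ω in {ω | ⟪Y ω, u⟫ ∈ B}, Y ω ∂P
      = ((∫ ω in {ω | ⟪Y ω, u⟫ ∈ B}, ⟪Y ω, u⟫ ∂P) / ⟪u, v⟫) • v := by
  have hs : MeasurableSet {y : E | ⟪y, u⟫ ∈ B} :=
    hB.preimage (continuous_id.inner continuous_const).measurable
  have hint : Integrable id (P.map Y) :=
    (integrable_map_measure aestronglyMeasurable_id hY.aemeasurable).2 hY
  have hpres : MeasurePreserving (axialSymmetry u v) (P.map Y) (P.map Y) :=
    hdens ▸ measurePreserving_axialSymmetry_withDensity hQ hQv huv μ G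
  have hlaw := setIntegral_id_eq_smul_of_measurePreserving_axialSymmetry huv hpres
    (B := B) hint.integrableOn
  rwa [setIntegral_map hs (by fun_prop) hY.aemeasurable,
    setIntegral_map hs (by fun_prop) hY.aemeasurable] at hlaw

end AxialSymmetry

section Matrix

variable {n : Type*} [Fintype n] [DecidableEq n] {S : Matrix n n ℝ}

theorem toEuclideanLin_inv_apply_toEuclideanLin (hS : IsUnit S) (u : EuclideanSpace ℝ n) :
    Matrix.toEuclideanLin S⁻¹ (Matrix.toEuclideanLin S u) = u := by
  rw [← LinearMap.comp_apply, ← Matrix.toLpLin_mul_same,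
    Matrix.nonsing_inv_mul S ((Matrix.isUnit_iff_isUnit_det S).1 hS), Matrix.toLpLin_one,
    LinearMap.id_apply]

theorem inner_toEuclideanLin_self_pos (hS : S.PosDef) {u : EuclideanSpace ℝ n} (hu : u ≠ 0) :
    0 < ⟪u, Matrix.toEuclideanLin S u⟫ := by
  rw [EuclideanSpace.inner_eq_star_dotProduct, dotProduct_comm]
  exact hS.dotProduct_mulVec_pos (by simpa using hu)

end Matrix

/-- for a centered elliptical random vector `Y` in `ℝ^d` with positive definite
scatter matrix `Σ`, `E[‖Y‖] < ∞`, a unit vector `u`, and `Z = ⟨Y, u⟩`, one has for every `t`: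
`E[Y·1_{Z≤t}] = (Σu / uᵀΣu)·E[Z·1_{Z≤t}]`. -/
theorem elliptical_truncated_mean_direction {Ω : Type*} [MeasurableSpace Ω] {d : ℕ}
    (P : Measure Ω) [IsProbabilityMeasure P]
    (Y : Ω → EuclideanSpace ℝ (Fin d)) (hY : Measurable Y)
    (S : Matrix (Fin d) (Fin d) ℝ) (hS : S.PosDef)
    (g : ℝ → ℝ) (hg : ∀ s, 0 ≤ g s) (C : ℝ) (hC : 0 < C)
    (hdens : Measure.map Y P = volume.withDensity
      (fun y => ENNReal.ofReal (C * g ⟪y, Matrix.toEuclideanLin S⁻¹ y⟫)))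
    (hint : Integrable (fun ω => ‖Y ω‖) P)
    (u : EuclideanSpace ℝ (Fin d)) (hu : ‖u‖ = 1) :
    ∀ t : ℝ,
      (∫ ω in {ω | ⟪Y ω, u⟫ ≤ t}, Y ω ∂P)
        = ((∫ ω in {ω | ⟪Y ω, u⟫ ≤ t}, ⟪Y ω, u⟫ ∂P) / ⟪u, Matrix.toEuclideanLin S u⟫)
            • Matrix.toEuclideanLin S u := fun _ =>
  elliptical_truncated_mean_direction_general (G := fun s => ENNReal.ofReal (C * g s))
    ((integrable_norm_iff hY.aestronglyMeasurable).1 hint)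
    (Matrix.isSymmetric_toEuclideanLin_iff.2 hS.inv.isHermitian)
    (toEuclideanLin_inv_apply_toEuclideanLin hS.isUnit u)
    (inner_toEuclideanLin_self_pos hS (norm_ne_zero_iff.1 (hu ▸ one_ne_zero))).ne'
    hdens measurableSet_Iic
end
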